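/- arXiv:1909.13347 — 3 statements merged into one kernel-verified Lean document; each statement's English description precedes it below -/
import Mathlib

section
/- Let M be a positive definite Hermitian n×n complex matrix. Then for every C : Matrix n n ℂ the Sylvester equation Y·M + M·Y = C has a unique solution Y (i.e. the linear map Y ↦ Y·M + M·Y is bijective), and the solution satisfies vec Y = (Mᵀ ⊗ I_n + I_n ⊗ M)⁻¹ ·ᵥ vec C. -/
open Matrix
open scoped Kronecker ComplexOrder Matrix

/-- Column-stacking vectorization: `(vecCol X) (j, i) = X i j` (column index listed first). -/
def vecCol {n : Type*} (X : Matrix n n ℂ) : n × n → ℂ := fun p => X p.2 p.1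

/-- **Solvability of the Sylvester equation for a positive definite coefficient.**
For a positive definite Hermitian `M`, the map `Y ↦ Y·M + M·Y` is bijective (so for every `C`
the Sylvester equation `Y·M + M·Y = C` has a unique solution), and every solution satisfies
`vec Y = (Mᵀ ⊗ I + I ⊗ M)⁻¹ ·ᵥ vec C`. -/
theorem sylvester_posDef_unique_solution {n : Type*} [Fintype n] [DecidableEq n] [Nonempty n]
    (M : Matrix n n ℂ) (hM : M.PosDef) :
    Function.Bijective (fun Y : Matrix n n ℂ => Y * M + M * Y) ∧
      ∀ (C Y : Matrix n n ℂ), Y * M + M * Y = C →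
        vecCol Y = (Mᵀ ⊗ₖ (1 : Matrix n n ℂ) + (1 : Matrix n n ℂ) ⊗ₖ M)⁻¹ *ᵥ vecCol C := by
  set K := Mᵀ ⊗ₖ (1 : Matrix n n ℂ) + (1 : Matrix n n ℂ) ⊗ₖ M with hK
  have hKpd : K.PosDef :=
    (hM.transpose.kronecker Matrix.PosDef.one).add (Matrix.PosDef.one.kronecker hM)
  have hdet : IsUnit K.det := (Matrix.isUnit_iff_isUnit_det K).mp hKpd.isUnit
  have key : ∀ Y : Matrix n n ℂ, vec (Y * M + M * Y) = K *ᵥ vec Y := by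
    intro Y
    rw [hK, Matrix.add_mulVec, kronecker_mulVec_vec, kronecker_mulVec_vec, vec_add]
    simp
  have sol : ∀ C Y : Matrix n n ℂ, Y * M + M * Y = C → vec Y = K⁻¹ *ᵥ vec C := by
    rintro C Y rfl
    rw [key, Matrix.mulVec_mulVec, Matrix.nonsing_inv_mul K hdet, Matrix.one_mulVec]
  refine ⟨⟨fun Y Z h => ?_, fun C => ?_⟩, fun C Y h => sol C Y h⟩
  · exact vec_inj.mp ((sol _ Y h).trans (sol _ Z rfl).symm)
  · obtain ⟨Y, hY⟩ := vec_bijective.2 (K⁻¹ *ᵥ vec C)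
    refine ⟨Y, vec_inj.mp ?_⟩
    change vec (Y * M + M * Y) = vec C
    rw [key, hY, Matrix.mulVec_mulVec, Matrix.mul_nonsing_inv K hdet, Matrix.one_mulVec]
end

section
/- Quantum speed limit: let p ≥ 1 be real, let ρ : ℝ → Matrix n n ℂ be entrywise differentiable on the interval [s, t] (s ≤ t), and suppose ‖ρ'(u)‖_p ≤ v for all u ∈ [s, t]. Then |‖ρ(t) − ρ(0)‖_p − ‖ρ(s) − ρ(0)‖_p| ≤ v·(t − s); in particular the distinguishability ‖ρ(t) − ρ(0)‖_p of the evolved state from the initial state changes at rate at most sup_u ‖ρ'(u)‖_p. -/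
open Matrix
open scoped ComplexOrder

/-- The Schatten `p`-norm `‖X‖_p = (Σᵢ sᵢ^p)^{1/p}`, where the `sᵢ` are the singular values
of `X`, i.e. the nonnegative square roots of the eigenvalues of `Xᴴ·X`. -/
noncomputable def schattenNorm {n : Type*} [Fintype n] [DecidableEq n]
    (p : ℝ) (X : Matrix n n ℂ) : ℝ :=
  (∑ i, (Real.sqrt ((Matrix.posSemidef_conjTranspose_mul_self X).1.eigenvalues i)) ^ p)
    ^ (1 / p)

open scoped InnerProductSpace

namespace SchattenAux

/-- Singular values. -/
noncomputable def sv {n : Type*} [Fintype n] [DecidableEq n] (X : Matrix n n ℂ) (i : n) : ℝ :=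
  Real.sqrt ((Matrix.posSemidef_conjTranspose_mul_self X).1.eigenvalues i)

lemma svd {n : Type*} [Fintype n] [DecidableEq n] (X : Matrix n n ℂ) :
    ∃ e f : OrthonormalBasis n ℂ (EuclideanSpace ℂ n),
      ∀ i, Matrix.toEuclideanLin X (e i) = (sv X i : ℂ) • f i := by
  set H := (Matrix.posSemidef_conjTranspose_mul_self X) with hH
  set e := H.1.eigenvectorBasis with he
  have hinner : ∀ i j, ⟪Matrix.toEuclideanLin X (e i), Matrix.toEuclideanLin X (e j)⟫_ℂ
      = if i = j then ((sv X i : ℂ)) ^ 2 else 0 := by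
    intro i j
    have h1 : Matrix.toEuclideanLin Xᴴ (Matrix.toEuclideanLin X (e j))
        = ((H.1.eigenvalues j : ℝ) : ℂ) • e j := by
      have := H.1.mulVec_eigenvectorBasis j
      ext a
      have h2 := congrFun this a
      simp only [Matrix.toLpLin_apply, Matrix.mulVec_mulVec]
      simpa using h2
    rw [← LinearMap.adjoint_inner_right, ← Matrix.toEuclideanLin_conjTranspose_eq_adjoint, h1,
      inner_smul_right, orthonormal_iff_ite.mp e.orthonormal i j]
    split_ifs with h
    · subst h
      have : (sv X i) ^ 2 = H.1.eigenvalues i := Real.sq_sqrt (H.eigenvalues_nonneg i)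
      rw [← this]; push_cast; ring
    · simp
  have hzero : ∀ i, sv X i = 0 → Matrix.toEuclideanLin X (e i) = 0 := by
    intro i hi
    have := hinner i i
    rw [if_pos rfl, hi] at this
    simpa using this
  let w : n → EuclideanSpace ℂ n := fun i => ((sv X i : ℂ))⁻¹ • Matrix.toEuclideanLin X (e i)
  let S : Set n := {i | sv X i ≠ 0}
  have hw : Orthonormal ℂ (S.domRestrict w) := by
    rw [orthonormal_iff_ite]
    rintro ⟨i, hi⟩ ⟨j, hj⟩
    simp only [Set.domRestrict_apply, w, inner_smul_left, inner_smul_right, hinner, Subtype.mk.injEq]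
    split_ifs with h
    · subst h
      have : (sv X i : ℂ) ≠ 0 := by exact_mod_cast hi
      simp only [map_inv₀, Complex.conj_ofReal]
      field_simp
    · simp
  obtain ⟨f, hf⟩ := hw.exists_orthonormalBasis_extension_of_card_eq (by simp)
  refine ⟨e, f, fun i => ?_⟩
  by_cases hi : sv X i = 0
  · rw [hzero i hi, hi]; simp
  · rw [hf i hi]
    have : (sv X i : ℂ) ≠ 0 := by exact_mod_cast hi
    simp only [w, smul_smul]
    rw [mul_inv_cancel₀ this, one_smul]

lemma sv_nonneg {n : Type*} [Fintype n] [DecidableEq n] (X : Matrix n n ℂ) (i : n) :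
    0 ≤ sv X i := Real.sqrt_nonneg _

lemma diag_le {n : Type*} [Fintype n] [DecidableEq n] (p : ℝ) (hp : 1 ≤ p) (Z : Matrix n n ℂ)
    (e f : OrthonormalBasis n ℂ (EuclideanSpace ℂ n)) :
    ∑ i, ‖⟪f i, Matrix.toEuclideanLin Z (e i)⟫_ℂ‖ ^ p ≤ ∑ j, sv Z j ^ p := by
  obtain ⟨h, g, hg⟩ := svd Z
  let D : n → n → ℝ := fun i j => (‖⟪h j, e i⟫_ℂ‖ ^ 2 + ‖⟪f i, g j⟫_ℂ‖ ^ 2) / 2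
  have hD0 : ∀ i j, 0 ≤ D i j := fun i j => by positivity
  have hDr : ∀ i, ∑ j, D i j = 1 := by
    intro i
    simp only [D]
    rw [← Finset.sum_div, Finset.sum_add_distrib, h.sum_sq_norm_inner_right,
      g.sum_sq_norm_inner_left]
    simp
  have hDc : ∀ j, ∑ i, D i j = 1 := by
    intro j
    simp only [D]
    rw [← Finset.sum_div, Finset.sum_add_distrib, e.sum_sq_norm_inner_left,
      f.sum_sq_norm_inner_right]
    simp
  have key : ∀ i, ‖⟪f i, Matrix.toEuclideanLin Z (e i)⟫_ℂ‖ ≤ ∑ j, D i j * sv Z j := by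
    intro i
    have : ⟪f i, Matrix.toEuclideanLin Z (e i)⟫_ℂ
        = ∑ j, ⟪h j, e i⟫_ℂ * ((sv Z j : ℂ) * ⟪f i, g j⟫_ℂ) := by
      conv_lhs => rw [← h.sum_repr' (e i)]
      simp only [map_sum, map_smul, inner_sum, inner_smul_right, hg]
    rw [this]
    refine (norm_sum_le _ _).trans (Finset.sum_le_sum fun j _ => ?_)
    rw [norm_mul, norm_mul, Complex.norm_real, Real.norm_of_nonneg (sv_nonneg Z j)]
    simp only [D]
    have := mul_nonneg (sv_nonneg Z j) (sq_nonneg (‖⟪h j, e i⟫_ℂ‖ - ‖⟪f i, g j⟫_ℂ‖))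
    nlinarith
  calc ∑ i, ‖⟪f i, Matrix.toEuclideanLin Z (e i)⟫_ℂ‖ ^ p
      ≤ ∑ i, ∑ j, D i j * sv Z j ^ p := by
        refine Finset.sum_le_sum fun i _ => ?_
        refine (Real.rpow_le_rpow (norm_nonneg _) (key i) (by linarith)).trans ?_
        exact Real.rpow_arith_mean_le_arith_mean_rpow _ _ _ (fun j _ => hD0 i j) (hDr i)
          (fun j _ => sv_nonneg Z j) hp
    _ = ∑ j, sv Z j ^ p := by
        rw [Finset.sum_comm]
        refine Finset.sum_congr rfl fun j _ => ?_
        rw [← Finset.sum_mul, hDc, one_mul]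

lemma lp_dual {n : Type*} [Fintype n] (p : ℝ) (hp : 1 ≤ p) (a : n → ℝ) (ha : ∀ i, 0 ≤ a i) :
    ∃ c : n → ℝ, (∀ i, 0 ≤ c i) ∧ ∑ i, c i * a i = (∑ i, a i ^ p) ^ (1 / p) ∧
      ∀ x : n → ℝ, (∀ i, 0 ≤ x i) → ∑ i, c i * x i ≤ (∑ i, x i ^ p) ^ (1 / p) := by
  rcases hp.eq_or_lt with rfl | hp
  · exact ⟨fun _ => 1, by simp, by simp, by simp⟩
  have hA0 : 0 ≤ ∑ i, a i ^ p := Finset.sum_nonneg fun i _ => Real.rpow_nonneg (ha i) _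
  rcases hA0.eq_or_lt with hA | hA
  · refine ⟨fun _ => 0, by simp, ?_, fun x hx => ?_⟩
    · rw [← hA, Real.zero_rpow (by positivity)]; simp
    · simp only [zero_mul, Finset.sum_const_zero]
      exact Real.rpow_nonneg (Finset.sum_nonneg fun i _ => Real.rpow_nonneg (hx i) _) _
  set A := ∑ i, a i ^ p with hAdef
  have hpq : p.HolderConjugate (p / (p - 1)) := Real.HolderConjugate.conjExponent hp
  have hp1 : p - 1 ≠ 0 := by linarith
  have hp0 : p ≠ 0 := by linarith
  set K := A ^ (1 / (p / (p - 1))) with hK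
  have hK0 : 0 < K := Real.rpow_pos_of_pos hA _
  refine ⟨fun i => a i ^ (p - 1) / K, fun i => div_nonneg (Real.rpow_nonneg (ha i) _) hK0.le,
    ?_, fun x hx => ?_⟩
  · have : ∀ i, a i ^ (p - 1) / K * a i = a i ^ p / K := by
      intro i
      rw [div_mul_eq_mul_div]
      congr 1
      rcases (ha i).eq_or_lt with h | h
      · rw [← h, Real.zero_rpow hp0]; simp
      · rw [← Real.rpow_add_one h.ne']; ring_nf
    simp only [this]
    rw [← Finset.sum_div, ← hAdef, div_eq_iff hK0.ne', hK, ← Real.rpow_add hA]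
    have : 1 / p + 1 / (p / (p - 1)) = 1 := by field_simp; ring
    rw [this, Real.rpow_one]
  · have h1 := Real.inner_le_Lp_mul_Lq_of_nonneg Finset.univ hpq.symm
      (f := fun i => a i ^ (p - 1)) (g := x)
      (fun i _ => Real.rpow_nonneg (ha i) _) (fun i _ => hx i)
    have h2 : ∀ i, (a i ^ (p - 1)) ^ (p / (p - 1)) = a i ^ p := by
      intro i
      rw [← Real.rpow_mul (ha i)]
      congr 1
      field_simp
    simp only [h2] at h1
    simp only [div_mul_eq_mul_div]
    rw [← Finset.sum_div, div_le_iff₀ hK0, mul_comm]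
    exact h1

lemma dual {n : Type*} [Fintype n] [DecidableEq n] (p : ℝ) (hp : 1 ≤ p) (X : Matrix n n ℂ) :
    ∃ Y : n → n → ℂ, (∑ a, ∑ b, Y a b * X a b).re = schattenNorm p X ∧
      ∀ Z : Matrix n n ℂ, |(∑ a, ∑ b, Y a b * Z a b).re| ≤ schattenNorm p Z := by
  obtain ⟨e, f, hef⟩ := svd X
  obtain ⟨c, hc0, hc1, hc2⟩ := lp_dual p hp (sv X) (sv_nonneg X)
  let Y : n → n → ℂ := fun a b => ∑ i, (c i : ℂ) * (star (f i a) * e i b)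
  have hY : ∀ Z : Matrix n n ℂ, (∑ a, ∑ b, Y a b * Z a b)
      = ∑ i, (c i : ℂ) * ⟪f i, Matrix.toEuclideanLin Z (e i)⟫_ℂ := by
    intro Z
    simp only [Y, PiLp.inner_apply, Matrix.toLpLin_apply, Matrix.mulVec, dotProduct,
      RCLike.inner_apply, Finset.sum_mul, Finset.mul_sum]
    rw [Finset.sum_congr rfl fun a _ => Finset.sum_comm, Finset.sum_comm]
    refine Finset.sum_congr rfl fun i _ => Finset.sum_congr rfl fun a _ =>
      Finset.sum_congr rfl fun b _ => ?_
    simp only [starRingEnd_apply]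
    ring
  refine ⟨Y, ?_, fun Z => ?_⟩
  · rw [hY]
    simp only [hef, inner_smul_right, inner_self_eq_norm_sq_to_K, f.orthonormal.1]
    simp only [schattenNorm]
    change _ = (∑ i, sv X i ^ p) ^ (1 / p)
    rw [← hc1]
    simp
  · rw [hY]
    change _ ≤ (∑ i, sv Z i ^ p) ^ (1 / p)
    refine (Complex.abs_re_le_norm _).trans ((norm_sum_le _ _).trans ?_)
    simp only [norm_mul, Complex.norm_real, Real.norm_of_nonneg (hc0 _)]
    refine (hc2 _ fun i => norm_nonneg _).trans ?_
    refine Real.rpow_le_rpow (Finset.sum_nonneg fun i _ => Real.rpow_nonneg (norm_nonneg _) _)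
      (diag_le p hp Z e f) (by positivity)

lemma mvt {n : Type*} [Fintype n] [DecidableEq n]
    (p : ℝ) (s t : ℝ) (hst : s ≤ t)
    (ρ : ℝ → Matrix n n ℂ) (ρ' : ℝ → Matrix n n ℂ) (v : ℝ)
    (hderiv : ∀ u ∈ Set.Icc s t, ∀ i j,
      HasDerivWithinAt (fun r => ρ r i j) (ρ' u i j) (Set.Icc s t) u)
    (hbound : ∀ u ∈ Set.Icc s t, schattenNorm p (ρ' u) ≤ v) (Y : n → n → ℂ)
    (hY : ∀ Z : Matrix n n ℂ, |(∑ a, ∑ b, Y a b * Z a b).re| ≤ schattenNorm p Z) :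
    |(∑ a, ∑ b, Y a b * ρ t a b).re - (∑ a, ∑ b, Y a b * ρ s a b).re| ≤ v * (t - s) := by
  have hd : ∀ u ∈ Set.Icc s t, HasDerivWithinAt (fun r => (∑ a, ∑ b, Y a b * ρ r a b).re)
      ((∑ a, ∑ b, Y a b * ρ' u a b).re) (Set.Icc s t) u := by
    intro u hu
    have : HasDerivWithinAt (fun r => (∑ a, ∑ b, Y a b * ρ r a b))
      ((∑ a, ∑ b, Y a b * ρ' u a b)) (Set.Icc s t) u :=
      HasDerivWithinAt.fun_sum fun a _ => HasDerivWithinAt.fun_sum fun b _ =>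
        (hderiv u hu a b).const_mul _
    exact (Complex.reCLM.hasFDerivAt.comp_hasDerivWithinAt u this)
  have := (convex_Icc s t).norm_image_sub_le_of_norm_hasDerivWithin_le hd
    (fun u hu => (hY (ρ' u)).trans (hbound u hu)) (Set.left_mem_Icc.mpr hst)
    (Set.right_mem_Icc.mpr hst)
  rwa [Real.norm_eq_abs, Real.norm_of_nonneg (sub_nonneg.mpr hst)] at this

end SchattenAux

/-- **Quantum speed limit for Schatten-`p` distinguishability.**
If `ρ` is entrywise differentiable on `[s, t]` with `‖ρ'(u)‖_p ≤ v` there, then the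
distinguishability `‖ρ(·) − ρ(0)‖_p` of the evolved state from the initial state changes
by at most `v·(t − s)` between times `s` and `t`. -/
theorem schatten_quantum_speed_limit {n : Type*} [Fintype n] [DecidableEq n] [Nonempty n]
    (p : ℝ) (hp : 1 ≤ p) (s t : ℝ) (hst : s ≤ t)
    (ρ : ℝ → Matrix n n ℂ) (ρ' : ℝ → Matrix n n ℂ) (v : ℝ)
    (hderiv : ∀ u ∈ Set.Icc s t, ∀ i j,
      HasDerivWithinAt (fun r => ρ r i j) (ρ' u i j) (Set.Icc s t) u)
    (hbound : ∀ u ∈ Set.Icc s t, schattenNorm p (ρ' u) ≤ v) :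
    |schattenNorm p (ρ t - ρ 0) - schattenNorm p (ρ s - ρ 0)| ≤ v * (t - s) := by
  have lin : ∀ (Y : n → n → ℂ) (A B : Matrix n n ℂ), (∑ a, ∑ b, Y a b * (A - B) a b).re
      = (∑ a, ∑ b, Y a b * A a b).re - (∑ a, ∑ b, Y a b * B a b).re := by
    intro Y A B
    simp only [Matrix.sub_apply, mul_sub, Finset.sum_sub_distrib, Complex.sub_re]
  obtain ⟨Y₁, h₁, h₁'⟩ := SchattenAux.dual p hp (ρ t - ρ 0)
  obtain ⟨Y₂, h₂, h₂'⟩ := SchattenAux.dual p hp (ρ s - ρ 0)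
  have m₁ := abs_le.mp (SchattenAux.mvt p s t hst ρ ρ' v hderiv hbound Y₁ h₁')
  have m₂ := abs_le.mp (SchattenAux.mvt p s t hst ρ ρ' v hderiv hbound Y₂ h₂')
  have k₁ := (le_abs_self _).trans (h₁' (ρ s - ρ 0))
  have k₂ := (le_abs_self _).trans (h₂' (ρ t - ρ 0))
  rw [lin] at h₁ h₂ k₁ k₂
  rw [abs_le]
  constructor <;> linarith [m₁.1, m₁.2, m₂.1, m₂.2]
end

section
/- Let p ≥ 1 be real and let A : ℝ → Matrix n n ℂ be entrywise differentiable at t₀ with derivative A', with A(t) Hermitian for all t and A(t₀) invertible, with real eigenvalues (λ_i) (all nonzero) and corresponding orthonormal eigenvectors (u_i). Then t ↦ ‖A(t)‖_p is differentiable at t₀ with derivative ‖A(t₀)‖_p^{1−p} · Σ_i sgn(λ_i)·|λ_i|^{p−1} · Re⟨u_i, A'·u_i⟩, where ⟨u, w⟩ := Σ_k conj(u_k)·w_k. -/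
open Matrix
open scoped ComplexOrder Matrix

section helpers

lemma aux_squeeze (g s : ℝ → ℝ) (t₀ : ℝ) (h : ∀ᶠ t in nhds t₀, |g t| ≤ s t)
    (hs0 : s t₀ = 0) (hs : HasDerivAt s 0 t₀) : HasDerivAt g 0 t₀ := by
  have hg0 : g t₀ = 0 := by
    have := h.self_of_nhds
    rw [hs0] at this
    exact abs_nonpos_iff.1 this
  rw [hasDerivAt_iff_isLittleO] at hs ⊢
  simp only [hs0, hg0, smul_zero, sub_zero] at hs ⊢
  refine Asymptotics.IsBigO.trans_isLittleO ?_ hs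
  refine Asymptotics.IsBigO.of_bound 1 ?_
  filter_upwards [h] with t ht
  rw [one_mul, Real.norm_eq_abs, Real.norm_eq_abs]
  exact ht.trans (le_abs_self _)

lemma aux_taylor (q a R : ℝ) (hq : 0 < q) (ha : 0 < a) :
    ∃ C, 0 ≤ C ∧ ∀ x ∈ Set.Icc 0 R,
      |x ^ q - a ^ q - q * a ^ (q - 1) * (x - a)| ≤ C * (x - a) ^ 2 := by
  have hcont : Continuous (fun x : ℝ => x ^ q - a ^ q - q * a ^ (q - 1) * (x - a)) := by
    have : Continuous (fun x : ℝ => x ^ q) := Real.continuous_rpow_const hq.le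
    fun_prop
  have hloc : ∃ c, 0 ≤ c ∧ ∀ᶠ x in nhds a,
      |x ^ q - a ^ q - q * a ^ (q - 1) * (x - a)| ≤ c * (x - a) ^ 2 := by
    have hd : ∀ x : ℝ, 0 < x → HasDerivAt (fun x : ℝ => x ^ q) (q * x ^ (q - 1)) x :=
      fun x hx => Real.hasDerivAt_rpow_const (Or.inl hx.ne')
    have hdd : HasDerivAt (fun x : ℝ => q * x ^ (q - 1)) (q * ((q - 1) * a ^ (q - 1 - 1))) a :=
      (Real.hasDerivAt_rpow_const (Or.inl ha.ne')).const_mul q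
    obtain ⟨c, hc, hb⟩ := hdd.isBigO_sub.exists_nonneg
    refine ⟨c, hc, ?_⟩
    have hb' := hb.bound
    obtain ⟨ε, hε, hball⟩ := Metric.eventually_nhds_iff_ball.1 (hb'.and (lt_mem_nhds ha))
    filter_upwards [Metric.ball_mem_nhds a hε] with x hx
    have hseg : ∀ y ∈ segment ℝ a x, y ∈ Metric.ball a ε ∧ |y - a| ≤ |x - a| := by
      intro y hy
      refine ⟨(convex_ball a ε).segment_subset (Metric.mem_ball_self hε) hx hy, ?_⟩
      rw [segment_eq_uIcc] at hy
      exact Set.abs_sub_left_of_mem_uIcc hy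
    have hder : ∀ y ∈ segment ℝ a x, HasDerivWithinAt
        (fun x : ℝ => x ^ q - a ^ q - q * a ^ (q - 1) * (x - a))
        (q * y ^ (q - 1) - q * a ^ (q - 1)) (segment ℝ a x) y := by
      intro y hy
      have h1 := hd y (hball y (hseg y hy).1).2
      have h2 := (h1.sub_const (a ^ q)).sub
        (((hasDerivAt_id y).sub_const a).const_mul (q * a ^ (q - 1)))
      rw [mul_one] at h2
      exact h2.hasDerivWithinAt
    have hbd : ∀ y ∈ segment ℝ a x, ‖q * y ^ (q - 1) - q * a ^ (q - 1)‖ ≤ c * |x - a| := by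
      intro y hy
      refine ((hball y (hseg y hy).1).1).trans ?_
      rw [Real.norm_eq_abs]
      exact mul_le_mul_of_nonneg_left (hseg y hy).2 hc
    have := (convex_segment a x).norm_image_sub_le_of_norm_hasDerivWithin_le hder hbd
      (left_mem_segment ℝ a x) (right_mem_segment ℝ a x)
    simp only [sub_self, mul_zero, sub_zero, Real.norm_eq_abs] at this
    refine this.trans (le_of_eq ?_)
    rw [mul_assoc, ← sq, sq_abs]
  obtain ⟨c, hc, hev⟩ := hloc
  obtain ⟨ε, hε, hball⟩ := Metric.eventually_nhds_iff_ball.1 hev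
  obtain ⟨M, hM⟩ := (isCompact_Icc (a := (0:ℝ)) (b := R)).exists_bound_of_continuousOn
    hcont.continuousOn
  refine ⟨c + |M| / ε ^ 2, by positivity, fun x hx => ?_⟩
  rw [add_mul]
  by_cases hxa : x ∈ Metric.ball a ε
  · have := hball x hxa
    have h2 : 0 ≤ |M| / ε ^ 2 * (x - a) ^ 2 := by positivity
    linarith
  · have h1 := (hM x hx).trans (le_abs_self M)
    rw [Real.norm_eq_abs] at h1
    have h2 : ε ≤ |x - a| := by
      rw [Metric.mem_ball, Real.dist_eq] at hxa
      exact not_lt.1 hxa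
    have h3 : ε ^ 2 ≤ (x - a) ^ 2 := by
      rw [← sq_abs (x - a)]; gcongr
    have h4 : |M| ≤ |M| / ε ^ 2 * (x - a) ^ 2 := by
      rw [div_mul_eq_mul_div, le_div_iff₀ (by positivity)]
      gcongr
    have : 0 ≤ c * (x - a) ^ 2 := by positivity
    linarith

variable {n : Type*} [Fintype n]

lemma aux_mul_deriv (A B : ℝ → Matrix n n ℂ) (A' B' : Matrix n n ℂ) (t₀ : ℝ)
    (hA : ∀ i j, HasDerivAt (fun t => A t i j) (A' i j) t₀)
    (hB : ∀ i j, HasDerivAt (fun t => B t i j) (B' i j) t₀) (i j : n) :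
    HasDerivAt (fun t => (A t * B t) i j) ((A' * B t₀ + A t₀ * B') i j) t₀ := by
  simp only [Matrix.mul_apply, Matrix.add_apply, ← Finset.sum_add_distrib]
  exact HasDerivAt.fun_sum fun k _ => (hA i k).mul (hB k j)

lemma aux_quad_deriv (A : ℝ → Matrix n n ℂ) (A' : Matrix n n ℂ) (t₀ : ℝ)
    (hA : ∀ i j, HasDerivAt (fun t => A t i j) (A' i j) t₀) (v : n → ℂ) :
    HasDerivAt (fun t => (star v ⬝ᵥ (A t *ᵥ v)).re) (star v ⬝ᵥ (A' *ᵥ v)).re t₀ := by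
  have h : HasDerivAt (fun t => (star v ⬝ᵥ (A t *ᵥ v))) (star v ⬝ᵥ (A' *ᵥ v)) t₀ := by
    simp only [dotProduct, Matrix.mulVec]
    exact HasDerivAt.fun_sum fun k _ => HasDerivAt.const_mul _
      (HasDerivAt.fun_sum fun l _ => (hA k l).mul_const _)
  exact (Complex.reCLM.hasFDerivAt.comp_hasDerivAt t₀ h)

lemma aux_eig_left (A : Matrix n n ℂ) (hA : A.IsHermitian) (v w : n → ℂ) (l : ℝ)
    (h : A *ᵥ v = (l : ℂ) • v) : star v ⬝ᵥ (A *ᵥ w) = (l : ℂ) * (star v ⬝ᵥ w) := by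
  rw [Matrix.dotProduct_mulVec]
  have : star v ᵥ* A = (l : ℂ) • star v := by
    have := congrArg star h
    rw [Matrix.star_mulVec, hA.eq] at this
    rw [this]
    simp
  rw [this, smul_dotProduct, smul_eq_mul]

variable [DecidableEq n]

/-- weights -/
lemma aux_weights (Y : Matrix n n ℂ) (hY : Y.IsHermitian) (u : n → n → ℂ)
    (hortho : ∀ i j, star (u i) ⬝ᵥ u j = if i = j then 1 else 0) :
    ∃ w : n → n → ℝ, (∀ i j, 0 ≤ w i j) ∧ (∀ i, ∑ j, w i j = 1) ∧ (∀ j, ∑ i, w i j = 1) ∧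
      (∀ i, ∑ j, w i j * hY.eigenvalues j = (star (u i) ⬝ᵥ (Y *ᵥ u i)).re) ∧
      (∀ i, ∑ j, w i j * hY.eigenvalues j ^ 2 = (star (u i) ⬝ᵥ ((Y * Y) *ᵥ u i)).re) := by
  set V : Matrix n n ℂ := (hY.eigenvectorUnitary : Matrix n n ℂ) with hV
  set U : Matrix n n ℂ := Matrix.of (fun k i => u i k) with hU
  have hVV : Vᴴ * V = 1 := Unitary.coe_star_mul_self hY.eigenvectorUnitary
  have hVV' : V * Vᴴ = 1 := Unitary.coe_mul_star_self hY.eigenvectorUnitary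
  have hUU : Uᴴ * U = 1 := by
    ext i j
    rw [Matrix.mul_apply, Matrix.one_apply, ← hortho i j]
    simp [hU, dotProduct]
  have hUU' : U * Uᴴ = 1 := mul_eq_one_comm.1 hUU
  set D : Matrix n n ℂ := diagonal (fun j => (hY.eigenvalues j : ℂ)) with hD
  have hYD : Y = V * D * Vᴴ := by
    have := hY.spectral_theorem
    rw [Unitary.conjStarAlgAut_apply] at this
    exact this
  set W := Uᴴ * V with hW
  have hWW : W * Wᴴ = 1 := by
    rw [hW, conjTranspose_mul, conjTranspose_conjTranspose]
    calc Uᴴ * V * (Vᴴ * U) = Uᴴ * (V * Vᴴ) * U := by simp only [Matrix.mul_assoc]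
      _ = 1 := by rw [hVV', Matrix.mul_one, hUU]
  have hWW' : Wᴴ * W = 1 := mul_eq_one_comm.1 hWW
  have key : ∀ (d : n → ℝ) (i : n), ∑ j, Complex.normSq (W i j) * d j
      = ((W * diagonal (fun j => (d j : ℂ)) * Wᴴ) i i).re := by
    intro d i
    rw [Matrix.mul_apply, Complex.re_sum]
    refine Finset.sum_congr rfl fun j _ => ?_
    rw [Matrix.mul_diagonal, conjTranspose_apply, mul_right_comm]
    erw [Complex.mul_conj]
    rw [← Complex.ofReal_mul, Complex.ofReal_re]
  have quad : ∀ (Z : Matrix n n ℂ) (i : n), star (u i) ⬝ᵥ (Z *ᵥ u i) = (Uᴴ * Z * U) i i := by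
    intro Z i
    rw [Matrix.mul_assoc, Matrix.mul_apply]
    simp [hU, dotProduct, Matrix.mulVec, Matrix.mul_apply]
  refine ⟨fun i j => Complex.normSq (W i j), fun i j => Complex.normSq_nonneg _, ?_, ?_, ?_, ?_⟩
  · intro i
    have := key (fun _ => 1) i
    simpa [hWW] using this
  · intro j
    have h1 : (Wᴴ * W) j j = 1 := by rw [hWW', Matrix.one_apply_eq]
    rw [Matrix.mul_apply] at h1
    have h2 := congrArg Complex.re h1
    rw [Complex.re_sum, Complex.one_re] at h2
    rw [← h2]
    refine Finset.sum_congr rfl fun i _ => ?_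
    rw [conjTranspose_apply, mul_comm]
    erw [Complex.mul_conj]
    rw [Complex.ofReal_re]
  · intro i
    have hM : Uᴴ * Y * U = W * D * Wᴴ := by
      rw [hW, conjTranspose_mul, conjTranspose_conjTranspose]
      calc Uᴴ * Y * U = Uᴴ * (V * D * Vᴴ) * U := by rw [← hYD]
        _ = _ := by simp only [Matrix.mul_assoc]
    rw [key, quad, hM]
  · intro i
    have hsq : Y * Y = V * diagonal (fun j => ((hY.eigenvalues j ^ 2 : ℝ) : ℂ)) * Vᴴ := by
      have : diagonal (fun j => ((hY.eigenvalues j ^ 2 : ℝ) : ℂ)) = D * D := by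
        rw [hD, diagonal_mul_diagonal]
        congr 1; ext j; push_cast; ring
      rw [this]
      calc Y * Y = V * D * Vᴴ * (V * D * Vᴴ) := by rw [← hYD]
        _ = V * D * (Vᴴ * V) * D * Vᴴ := by simp only [Matrix.mul_assoc]
        _ = _ := by rw [hVV, Matrix.mul_one]; simp only [Matrix.mul_assoc]
    rw [key (fun j => hY.eigenvalues j ^ 2), quad, hsq, hW, conjTranspose_mul,
      conjTranspose_conjTranspose]
    simp only [Matrix.mul_assoc]

lemma aux_ineq (Y : Matrix n n ℂ) (hY : Y.IsHermitian) (u : n → n → ℂ)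
    (hortho : ∀ i j, star (u i) ⬝ᵥ u j = if i = j then 1 else 0)
    (f : ℝ → ℝ) (nu d C : n → ℝ)
    (hf : ∀ i j, |f (hY.eigenvalues j) - f (nu i) - d i * (hY.eigenvalues j - nu i)|
      ≤ C i * (hY.eigenvalues j - nu i) ^ 2) :
    |∑ j, f (hY.eigenvalues j)
        - ∑ i, (f (nu i) + d i * ((star (u i) ⬝ᵥ (Y *ᵥ u i)).re - nu i))|
      ≤ ∑ i, C i * ((star (u i) ⬝ᵥ ((Y * Y) *ᵥ u i)).re
          - 2 * nu i * (star (u i) ⬝ᵥ (Y *ᵥ u i)).re + nu i ^ 2) := by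
  obtain ⟨w, hw0, hw1, hw2, hw3, hw4⟩ := aux_weights Y hY u hortho
  have e1 : ∑ j, f (hY.eigenvalues j)
        - ∑ i, (f (nu i) + d i * ((star (u i) ⬝ᵥ (Y *ᵥ u i)).re - nu i))
      = ∑ i, ∑ j, w i j *
        (f (hY.eigenvalues j) - f (nu i) - d i * (hY.eigenvalues j - nu i)) := by
    have : ∑ j, f (hY.eigenvalues j) = ∑ i, ∑ j, w i j * f (hY.eigenvalues j) := by
      rw [Finset.sum_comm]
      refine Finset.sum_congr rfl fun j _ => ?_
      rw [← Finset.sum_mul, hw2, one_mul]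
    rw [this, ← Finset.sum_sub_distrib]
    refine Finset.sum_congr rfl fun i _ => ?_
    rw [← hw3]
    have h1 := hw1 i
    calc _ = ∑ j, w i j * f (hY.eigenvalues j) - ((∑ j, w i j) * f (nu i) +
          d i * (∑ j, w i j * hY.eigenvalues j - (∑ j, w i j) * nu i)) := by
            rw [h1, one_mul, one_mul]
      _ = _ := by
        rw [Finset.sum_mul, Finset.sum_mul, ← Finset.sum_sub_distrib, Finset.mul_sum,
          ← Finset.sum_add_distrib, ← Finset.sum_sub_distrib]
        exact Finset.sum_congr rfl fun j _ => by ring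
  rw [e1]
  refine (Finset.abs_sum_le_sum_abs _ _).trans (Finset.sum_le_sum fun i _ => ?_)
  refine (Finset.abs_sum_le_sum_abs _ _).trans ?_
  have e2 : C i * ((star (u i) ⬝ᵥ ((Y * Y) *ᵥ u i)).re
          - 2 * nu i * (star (u i) ⬝ᵥ (Y *ᵥ u i)).re + nu i ^ 2)
      = ∑ j, w i j * (C i * (hY.eigenvalues j - nu i) ^ 2) := by
    rw [← hw3, ← hw4]
    have h1 := hw1 i
    calc _ = C i * (∑ j, w i j * hY.eigenvalues j ^ 2
          - 2 * nu i * (∑ j, w i j * hY.eigenvalues j) + (∑ j, w i j) * nu i ^ 2) := by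
            rw [h1, one_mul]
      _ = _ := by
        rw [Finset.sum_mul, Finset.mul_sum, ← Finset.sum_sub_distrib, ← Finset.sum_add_distrib,
          Finset.mul_sum]
        exact Finset.sum_congr rfl fun j _ => by ring
  rw [e2]
  refine Finset.sum_le_sum fun j _ => ?_
  rw [abs_mul, abs_of_nonneg (hw0 i j)]
  exact mul_le_mul_of_nonneg_left (hf i j) (hw0 i j)

end helpers

theorem schattenNorm_hasDerivAt {n : Type*} [Fintype n] [DecidableEq n] [Nonempty n]
    (p : ℝ) (hp : 1 ≤ p)
    (A : ℝ → Matrix n n ℂ) (A' : Matrix n n ℂ) (t₀ : ℝ)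
    (hderiv : ∀ i j, HasDerivAt (fun t => A t i j) (A' i j) t₀)
    (hherm : ∀ t, (A t).IsHermitian)
    (hinv : IsUnit (A t₀))
    (lam : n → ℝ) (u : n → n → ℂ)
    (hlam : ∀ i, lam i ≠ 0)
    (hortho : ∀ i j, star (u i) ⬝ᵥ u j = if i = j then 1 else 0)
    (heig : ∀ i, (A t₀) *ᵥ u i = (lam i : ℂ) • u i) :
    HasDerivAt (fun t => schattenNorm p (A t))
      (schattenNorm p (A t₀) ^ (1 - p) *
        ∑ i, Real.sign (lam i) * |lam i| ^ (p - 1) *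
          (star (u i) ⬝ᵥ (A' *ᵥ u i)).re) t₀ := by
  have hp0 : 0 < p := by linarith
  set Y : ℝ → Matrix n n ℂ := fun t => (A t)ᴴ * A t with hYdef
  have hYH : ∀ t, (Y t).IsHermitian := fun t => (posSemidef_conjTranspose_mul_self (A t)).1
  have hYA : ∀ t, Y t = A t * A t := fun t => by rw [hYdef]; simp only [(hherm t).eq]
  set Y' : Matrix n n ℂ := A' * A t₀ + A t₀ * A' with hY'
  have hYd : ∀ i j, HasDerivAt (fun t => Y t i j) (Y' i j) t₀ := by
    intro i j
    simp only [hYA]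
    exact aux_mul_deriv A A A' A' t₀ hderiv hderiv i j
  set nu : n → ℝ := fun i => lam i ^ 2 with hnu
  have hnupos : ∀ i, 0 < nu i := fun i => by have := hlam i; positivity
  have hYeig : ∀ i, Y t₀ *ᵥ u i = (nu i : ℂ) • u i := by
    intro i
    rw [hYA, ← Matrix.mulVec_mulVec, heig, Matrix.mulVec_smul, heig, smul_smul]
    simp [hnu, sq]
  have huu : ∀ i, star (u i) ⬝ᵥ u i = 1 := fun i => by rw [hortho, if_pos rfl]
  have hY0 : ∀ i, (star (u i) ⬝ᵥ (Y t₀ *ᵥ u i)).re = nu i := by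
    intro i
    rw [hYeig, dotProduct_smul, huu]; simp
  have hYY0 : ∀ i, (star (u i) ⬝ᵥ ((Y t₀ * Y t₀) *ᵥ u i)).re = nu i ^ 2 := by
    intro i
    rw [← Matrix.mulVec_mulVec, hYeig, Matrix.mulVec_smul, hYeig, dotProduct_smul,
      dotProduct_smul, huu]
    simp [sq]
  have hYY' : ∀ i, (star (u i) ⬝ᵥ ((Y' * Y t₀ + Y t₀ * Y') *ᵥ u i)).re
      = 2 * nu i * (star (u i) ⬝ᵥ (Y' *ᵥ u i)).re := by
    intro i
    rw [Matrix.add_mulVec, dotProduct_add, ← Matrix.mulVec_mulVec _ Y' (Y t₀),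
      ← Matrix.mulVec_mulVec _ (Y t₀) Y', hYeig, aux_eig_left _ (hYH t₀) _ _ _ (hYeig i), Matrix.mulVec_smul, dotProduct_smul,
      smul_eq_mul, Complex.add_re, Complex.re_ofReal_mul]
    ring
  have hYu' : ∀ i, (star (u i) ⬝ᵥ (Y' *ᵥ u i)).re
      = 2 * lam i * (star (u i) ⬝ᵥ (A' *ᵥ u i)).re := by
    intro i
    rw [hY', Matrix.add_mulVec, dotProduct_add, ← Matrix.mulVec_mulVec, ← Matrix.mulVec_mulVec,
      heig, aux_eig_left _ (hherm t₀) _ _ _ (heig i), Matrix.mulVec_smul, dotProduct_smul,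
      smul_eq_mul, Complex.add_re, Complex.re_ofReal_mul]
    ring
  -- the trace bound
  have htr : ∀ t j, (hYH t).eigenvalues j ≤ (Y t).trace.re := by
    intro t j
    rw [(hYH t).trace_eq_sum_eigenvalues, Complex.re_sum]
    exact Finset.single_le_sum (f := fun j => (hYH t).eigenvalues j)
      (fun i _ => (posSemidef_conjTranspose_mul_self (A t)).eigenvalues_nonneg i)
      (Finset.mem_univ j)
  have hnn : ∀ t j, 0 ≤ (hYH t).eigenvalues j :=
    fun t j => (posSemidef_conjTranspose_mul_self (A t)).eigenvalues_nonneg j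
  have htrc : ContinuousAt (fun t => (Y t).trace.re) t₀ := by
    refine Complex.continuous_re.continuousAt.comp ?_
    simp only [Matrix.trace, Matrix.diag]
    exact tendsto_finsetSum _ fun i _ => (hYd i i).continuousAt
  set R : ℝ := (Y t₀).trace.re + 1 with hR
  have hRev : ∀ᶠ t in nhds t₀, (Y t).trace.re < R :=
    htrc.eventually (gt_mem_nhds (by rw [hR]; linarith))
  choose C hC0 hC using fun i => aux_taylor (p / 2) (nu i) R (by positivity) (hnupos i)
  set d : n → ℝ := fun i => p / 2 * nu i ^ (p / 2 - 1) with hd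
  set G : ℝ → ℝ := fun t => ∑ j, (hYH t).eigenvalues j ^ (p / 2) with hG
  set H : ℝ → ℝ := fun t =>
    ∑ i, (nu i ^ (p / 2) + d i * ((star (u i) ⬝ᵥ (Y t *ᵥ u i)).re - nu i)) with hH
  set S : ℝ → ℝ := fun t => ∑ i, C i * ((star (u i) ⬝ᵥ ((Y t * Y t) *ᵥ u i)).re
          - 2 * nu i * (star (u i) ⬝ᵥ (Y t *ᵥ u i)).re + nu i ^ 2) with hS
  have hGH : ∀ᶠ t in nhds t₀, |G t - H t| ≤ S t := by
    filter_upwards [hRev] with t ht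
    exact aux_ineq (Y t) (hYH t) u hortho (fun x => x ^ (p / 2)) nu d C
      (fun i j => hC i _ ⟨hnn t j, (htr t j).trans ht.le⟩)
  have hS0 : S t₀ = 0 := by
    simp only [hS]
    refine Finset.sum_eq_zero fun i _ => ?_
    rw [hYY0, hY0]; ring
  have hSd : HasDerivAt S 0 t₀ := by
    have : HasDerivAt S (∑ i, C i * ((star (u i) ⬝ᵥ ((Y' * Y t₀ + Y t₀ * Y') *ᵥ u i)).re
          - 2 * nu i * (star (u i) ⬝ᵥ (Y' *ᵥ u i)).re)) t₀ := by
      refine HasDerivAt.fun_sum fun i _ => ?_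
      refine HasDerivAt.const_mul _ (HasDerivAt.add_const _ (HasDerivAt.sub ?_ ?_))
      · exact aux_quad_deriv (fun t => Y t * Y t) _ t₀ (aux_mul_deriv Y Y Y' Y' t₀ hYd hYd) _
      · exact (aux_quad_deriv Y _ t₀ hYd _).const_mul _
    convert this using 1
    symm
    refine Finset.sum_eq_zero fun i _ => ?_
    rw [hYY']; ring
  have hHd : HasDerivAt H (∑ i, d i * (star (u i) ⬝ᵥ (Y' *ᵥ u i)).re) t₀ := by
    refine HasDerivAt.fun_sum fun i _ => ?_
    exact (((aux_quad_deriv Y _ t₀ hYd _).sub_const _).const_mul _).const_add _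
  have hGHd := aux_squeeze (fun t => G t - H t) S t₀ hGH hS0 hSd
  have hGd : HasDerivAt G (∑ i, d i * (star (u i) ⬝ᵥ (Y' *ᵥ u i)).re) t₀ := by
    have := hGHd.add hHd
    rw [zero_add] at this
    refine this.congr_of_eventuallyEq (Filter.Eventually.of_forall fun t => ?_)
    simp
  have hG0 : G t₀ = ∑ i, nu i ^ (p / 2) := by
    have h1 := hGH.self_of_nhds
    rw [hS0] at h1
    have h2 := sub_eq_zero.1 (abs_nonpos_iff.1 h1)
    rw [h2, hH]
    refine Finset.sum_congr rfl fun i _ => ?_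
    rw [hY0]; ring
  have hGpos : 0 < G t₀ := by
    rw [hG0]
    exact Finset.sum_pos (fun i _ => Real.rpow_pos_of_pos (hnupos i) _) Finset.univ_nonempty
  have hsch : ∀ t, schattenNorm p (A t) = G t ^ (1 / p) := by
    intro t
    unfold schattenNorm
    congr 1
    refine Finset.sum_congr rfl fun j _ => ?_
    rw [Real.sqrt_eq_rpow, ← Real.rpow_mul (hnn t j)]
    congr 1; ring
  simp only [hsch]
  have hfin := hGd.rpow_const (p := 1 / p) (Or.inl hGpos.ne')
  convert hfin using 1
  rw [← Real.rpow_mul hGpos.le, show 1 / p * (1 - p) = 1 / p - 1 by field_simp]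
  have hterm : ∀ i, d i * (star (u i) ⬝ᵥ (Y' *ᵥ u i)).re
      = p * (Real.sign (lam i) * |lam i| ^ (p - 1) * (star (u i) ⬝ᵥ (A' *ᵥ u i)).re) := by
    intro i
    have habs : 0 < |lam i| := abs_pos.2 (hlam i)
    have h1 : nu i ^ (p / 2 - 1) = |lam i| ^ (p - 2) := by
      simp only [hnu]
      rw [← sq_abs, ← Real.rpow_natCast, ← Real.rpow_mul habs.le]
      congr 1; push_cast; ring
    have h2 : |lam i| ^ (p - 1) = |lam i| ^ (p - 2) * |lam i| := by
      rw [← Real.rpow_add_one habs.ne']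
      congr 1; ring
    have h3 : Real.sign (lam i) * |lam i| = lam i := by
      rcases lt_or_gt_of_ne (hlam i) with h | h
      · rw [Real.sign_of_neg h, abs_of_neg h]; ring
      · rw [Real.sign_of_pos h, abs_of_pos h]; ring
    rw [hYu', h2]
    simp only [hd]
    rw [h1]
    calc _ = p * (|lam i| ^ (p - 2) * lam i * (star (u i) ⬝ᵥ (A' *ᵥ u i)).re) := by ring
      _ = p * (|lam i| ^ (p - 2) * (Real.sign (lam i) * |lam i|)
            * (star (u i) ⬝ᵥ (A' *ᵥ u i)).re) := by rw [h3]
      _ = _ := by ring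
  rw [Finset.sum_congr rfl fun i _ => hterm i, ← Finset.mul_sum]
  field_simp
end
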